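/- Let μ be an atomless σ-finite positive measure and let Y be a nonzero Banach space over 𝕂 ∈ {ℝ, ℂ}. Then the Bochner space L_1(μ, Y) of μ-Bochner-integrable Y-valued functions has the polynomial weak operator Daugavet property. -/

import Mathlib

open Metric Set NormedSpace MeasureTheory

/-- `P : X → 𝕜` is a continuous polynomial: `P x = c + ∑ₖ Mₖ(x, …, x)` for a constant `c`
and continuous multilinear maps `Mₖ` of `k` variables, `k = 1, …, n`. -/
def IsContPolynomial {𝕜 X : Type} [RCLike 𝕜] [NormedAddCommGroup X] [NormedSpace 𝕜 X]
    (P : X → 𝕜) : Prop :=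
  ∃ (n : ℕ) (c : 𝕜)
    (M : (k : Fin n) → ContinuousMultilinearMap 𝕜 (fun _ : Fin (k.1 + 1) => X) 𝕜),
    ∀ x, P x = c + ∑ k, M k (fun _ => x)

/-- The polynomial weak operator Daugavet property: for every continuous polynomial `P`
with `‖P‖ = 1`, all `x₁, …, xₙ ∈ S_X`, every `x' ∈ B_X` and all `α, ε > 0`, there are
`y ∈ B_X`, a modulus-one scalar `ω` and an operator `T : X → X` with `‖T‖ ≤ 1 + ε`,
`‖T xᵢ - xᵢ‖ < ε` for all `i`, `‖T y - x'‖ < ε` and `Re (ω P(y)) > 1 - α`. -/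
def PolyWODP (𝕜 X : Type) [RCLike 𝕜] [NormedAddCommGroup X] [NormedSpace 𝕜 X] : Prop :=
  ∀ P : X → 𝕜, IsContPolynomial P →
    IsLUB ((fun y => ‖P y‖) '' closedBall (0 : X) 1) 1 →
    ∀ (n : ℕ) (xs : Fin n → X), (∀ i, ‖xs i‖ = 1) →
      ∀ x' : X, ‖x'‖ ≤ 1 → ∀ α > (0 : ℝ), ∀ ε > (0 : ℝ),
        ∃ (y : X) (ω : 𝕜) (T : X →L[𝕜] X), ‖y‖ ≤ 1 ∧ ‖ω‖ = 1 ∧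
          ‖T‖ ≤ 1 + ε ∧ (∀ i, ‖T (xs i) - xs i‖ < ε) ∧ ‖T y - x'‖ < ε ∧
          1 - α < RCLike.re (ω * P y)

/-- `μ` is atomless: every measurable set of positive measure contains a measurable
subset of strictly smaller positive measure. -/
def Atomless {α : Type} [MeasurableSpace α] (μ : Measure α) : Prop :=
  ∀ A : Set α, MeasurableSet A → 0 < μ A →
    ∃ B ⊆ A, MeasurableSet B ∧ 0 < μ B ∧ μ B < μ A

/-!
On the unit ball a continuous polynomial `P` has a first-order Taylor expansion with uniformly
quadratic remainder. Take `f ∈ L¹(μ, Y)` in the unit ball with `P f` close to `‖P‖`, and use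
atomlessness to cut it into `m × m` disjointly supported pieces of equal norm. Within each of the
`m` blocks choose one piece at random and rescale it with a random sign, so that its mean is the
whole block. Replacing the blocks by such choices one at a time loses only `O(1 / m²)` per block on
average, hence some choice gives `y` with `‖y‖ = 1` and `Re P y ≥ Re P f - O(1 / m)`; the support
`A` of `y` can be chosen at the same time so that each `‖1_A xᵢ‖` is `O(1 / m)`. Then `T` is
multiplication by `1_{Aᶜ}` plus the rank-one operator `x ↦ φ(1_A x) x'`, where `φ` norms `y`; it is
a contraction because `1_A` is an L-projection.
-/

open scoped NNReal ENNReal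

section Selection

variable {𝕜 V G : Type*} [RCLike 𝕜] [NormedAddCommGroup V] [NormedSpace 𝕜 V]
  [NormedAddCommGroup G] [NormedSpace 𝕜 G]

variable (𝕜) in
/-- `f` has a first-order Taylor expansion at every point of the closed unit ball, with remainder
at most `K * ‖v‖ ^ 2` for increments `v` of norm at most one. This is all that the selection
argument uses of a polynomial. -/
def HasQuadraticRemainder (f : V → G) (K : ℝ≥0) : Prop :=
  ∀ a : V, ‖a‖ ≤ 1 → ∃ L : V →L[𝕜] G, ∀ v : V, ‖v‖ ≤ 1 →
    ‖f (a + v) - f a - L v‖ ≤ K * ‖v‖ ^ 2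

namespace HasQuadraticRemainder

lemma const_add {f : V → G} {K : ℝ≥0} (hf : HasQuadraticRemainder 𝕜 f K) (c : G) :
    HasQuadraticRemainder 𝕜 (fun x => c + f x) K := by
  simpa only [HasQuadraticRemainder, add_sub_add_left_eq_sub] using hf

lemma sum {ι : Type*} [Fintype ι] {f : ι → V → G} {K : ι → ℝ≥0}
    (hf : ∀ i, HasQuadraticRemainder 𝕜 (f i) (K i)) :
    HasQuadraticRemainder 𝕜 (fun x => ∑ i, f i x) (∑ i, K i) := by
  intro a ha
  choose L hL using fun i => hf i a ha
  refine ⟨∑ i, L i, fun v hv => ?_⟩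
  rw [sum_apply, ← Finset.sum_sub_distrib, ← Finset.sum_sub_distrib,
    NNReal.coe_sum, Finset.sum_mul]
  exact norm_sum_le_of_le _ fun i _ => hL i v hv

end HasQuadraticRemainder

lemma norm_map_piecewise_le {ι : Type*} [Fintype ι] [DecidableEq ι]
    (M : ContinuousMultilinearMap 𝕜 (fun _ : ι => V) G) {a v : V} (ha : ‖a‖ ≤ 1) (s : Finset ι) :
    ‖M (s.piecewise (fun _ => v) fun _ => a)‖ ≤ ‖M‖ * ‖v‖ ^ s.card := by
  refine (M.le_opNorm _).trans (mul_le_mul_of_nonneg_left ?_ (norm_nonneg M))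
  calc ∏ i, ‖s.piecewise (fun _ => v) (fun _ => a) i‖ ≤ ∏ i, if i ∈ s then ‖v‖ else 1 := by
        gcongr with i
        by_cases hi : i ∈ s <;> simp [hi, ha]
    _ = ‖v‖ ^ s.card := by simp

lemma hasQuadraticRemainder_diagonal {ι : Type*} [Fintype ι]
    (M : ContinuousMultilinearMap 𝕜 (fun _ : ι => V) G) :
    HasQuadraticRemainder 𝕜 (fun x => M fun _ => x) (2 ^ Fintype.card ι * ‖M‖₊) := by
  classical
  intro a ha
  refine ⟨(M.linearDeriv fun _ => a).comp (ContinuousLinearMap.pi fun _ => .id 𝕜 V),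
    fun v hv => ?_⟩
  have expansion : (M fun _ => a + v) - (M fun _ => a) - M.linearDeriv (fun _ => a) (fun _ => v) =
      ∑ s with 2 ≤ Finset.card s, M (s.piecewise (fun _ => v) fun _ => a) := by
    have h := M.toMultilinearMap.map_add_eq_map_add_linearDeriv_add (fun _ => a) fun _ => v
    rw [MultilinearMap.linearDeriv_apply] at h
    rw [sub_sub, sub_eq_iff_eq_add', ContinuousMultilinearMap.linearDeriv_apply]
    exact h
  have term_le (s : Finset ι) (hs : 2 ≤ s.card) :
      ‖M (s.piecewise (fun _ => v) fun _ => a)‖ ≤ ‖M‖ * ‖v‖ ^ 2 :=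
    (norm_map_piecewise_le M ha s).trans <| mul_le_mul_of_nonneg_left
      (pow_le_pow_of_le_one (norm_nonneg v) hv hs) (norm_nonneg M)
  calc _ = ‖∑ s with 2 ≤ Finset.card s, M (s.piecewise (fun _ => v) fun _ => a)‖ := by
        rw [← expansion]; rfl
    _ ≤ ∑ s : Finset ι with 2 ≤ Finset.card s, ‖M‖ * ‖v‖ ^ 2 :=
        norm_sum_le_of_le _ fun s hs => term_le s (Finset.mem_filter.1 hs).2
    _ ≤ ∑ _s : Finset ι, ‖M‖ * ‖v‖ ^ 2 :=
        Finset.sum_le_sum_of_subset_of_nonneg (Finset.filter_subset _ _) fun _ _ _ => by positivity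
    _ = _ := by simp [mul_assoc]

lemma exists_sum_mul_le {ι : Type*} [Fintype ι] {w : ι → ℝ} (hw : ∀ i, 0 ≤ w i)
    (hw1 : ∑ i, w i = 1) (q : ι → ℝ) : ∃ i, ∑ j, w j * q j ≤ q i := by
  obtain ⟨i, -, hi⟩ := (convexOn_id (𝕜 := ℝ) convex_univ).exists_ge_of_centerMass
    (t := Finset.univ) (p := q) (fun i _ => hw i) (hw1 ▸ one_pos) fun _ _ => mem_univ _
  exact ⟨i, by simpa [Finset.centerMass_eq_of_sum_1 _ _ hw1] using hi⟩

lemma norm_sum_smul_le {ι : Type*} [Fintype ι] {w : ι → ℝ} (hw : ∀ i, 0 ≤ w i)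
    (hw1 : ∑ i, w i = 1) {v : ι → V} {η : ℝ} (hv : ∀ i, ‖v i‖ ≤ η) :
    ‖∑ i, (w i : 𝕜) • v i‖ ≤ η :=
  calc ‖∑ i, (w i : 𝕜) • v i‖ ≤ ∑ i, w i * η := norm_sum_le_of_le _ fun i _ => by
        rw [norm_smul, RCLike.norm_of_nonneg (hw i)]
        exact mul_le_mul_of_nonneg_left (hv i) (hw i)
    _ = η := by rw [← Finset.sum_mul, hw1, one_mul]

namespace HasQuadraticRemainder

variable {P : V → 𝕜} {K : ℝ≥0} {ι κ : Type*} [Fintype ι] {w : ι → ℝ} {η : ℝ}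

lemma exists_re_le (hP : HasQuadraticRemainder 𝕜 P K) (hw : ∀ i, 0 ≤ w i) (hw1 : ∑ i, w i = 1)
    (hη : η ≤ 1 / 2) {v : ι → V} (hv : ∀ i, ‖v i‖ ≤ η) (b : ι → ℝ) {a : V} (ha : ‖a‖ ≤ 1) :
    ∃ i, RCLike.re (P a) - ∑ j, w j * b j - 4 * K * η ^ 2 ≤
      RCLike.re (P (a + (v i - ∑ j, (w j : 𝕜) • v j))) - b i := by
  obtain ⟨L, hL⟩ := hP a ha
  set d : ι → V := fun i => v i - ∑ j, (w j : 𝕜) • v j with hd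
  have hdn (i) : ‖d i‖ ≤ 2 * η :=
    (norm_sub_le _ _).trans (by linarith [hv i, norm_sum_smul_le (𝕜 := 𝕜) hw hw1 hv])
  have pointwise (i) : RCLike.re (P a) + RCLike.re (L (d i)) - 4 * K * η ^ 2 ≤
      RCLike.re (P (a + d i)) := by
    have remainder := (RCLike.abs_re_le_norm _).trans (hL (d i) ((hdn i).trans (by linarith)))
    have : K * ‖d i‖ ^ 2 ≤ K * (2 * η) ^ 2 := by gcongr; exact hdn i
    rw [map_sub, map_sub] at remainder
    linarith [(abs_le.1 remainder).1]
  have centered : ∑ i, w i * RCLike.re (L (d i)) = 0 := by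
    have hd0 : ∑ i, (w i : 𝕜) • d i = 0 := by
      simp only [hd, smul_sub, Finset.sum_sub_distrib, ← Finset.sum_smul]
      rw [← RCLike.ofReal_sum, hw1, RCLike.ofReal_one, one_smul, sub_self]
    simpa [RCLike.re_ofReal_mul] using congrArg (fun x => RCLike.re (L x)) hd0
  obtain ⟨i, hi⟩ := exists_sum_mul_le hw hw1
    fun i => RCLike.re (P a) + RCLike.re (L (d i)) - 4 * K * η ^ 2 - b i
  refine ⟨i, le_trans (le_of_eq ?_) (hi.trans (sub_le_sub_right (pointwise i) (b i)))⟩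
  simp only [mul_sub, mul_add, Finset.sum_sub_distrib, Finset.sum_add_distrib, ← Finset.sum_mul,
    hw1, centered]
  ring

-- The blocks are replaced by selections one at a time, each at the cost of one Taylor remainder.
lemma exists_selection_finset (hP : HasQuadraticRemainder 𝕜 P K) (hw : ∀ i, 0 ≤ w i)
    (hw1 : ∑ i, w i = 1) (hη : η ≤ 1 / 2) {v : κ → ι → V} (hv : ∀ j i, ‖v j i‖ ≤ η)
    (b : κ → ι → ℝ) (s : Finset κ) (z : V) (hz : ‖z‖ + s.card * η ≤ 1) :
    ∃ c : κ → ι,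
      RCLike.re (P (z + ∑ j ∈ s, ∑ i, (w i : 𝕜) • v j i)) - ∑ j ∈ s, ∑ i, w i * b j i
          - s.card * (4 * K * η ^ 2) ≤
        RCLike.re (P (z + ∑ j ∈ s, v j (c j))) - ∑ j ∈ s, b j (c j) := by
  classical
  induction s using Finset.induction_on generalizing z with
  | empty =>
    obtain ⟨i, -⟩ := exists_sum_mul_le hw hw1 0
    exact ⟨fun _ => i, by simp⟩
  | insert j s hj ih =>
    rw [Finset.card_insert_of_notMem hj] at hz ⊢
    push_cast at hz ⊢
    set u := ∑ i, (w i : 𝕜) • v j i with hu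
    have hzu : ‖z + u‖ + s.card * η ≤ 1 := by
      linarith [norm_add_le z u, norm_sum_smul_le (𝕜 := 𝕜) hw hw1 (hv j)]
    obtain ⟨c, hc⟩ := ih (z + u) hzu
    have hbase : ‖z + u + ∑ k ∈ s, v k (c k)‖ ≤ 1 := by
      have := norm_sum_le_of_le s fun k _ => hv k (c k)
      rw [Finset.sum_const, nsmul_eq_mul] at this
      linarith [norm_add_le (z + u) (∑ k ∈ s, v k (c k))]
    obtain ⟨i, hi⟩ := hP.exists_re_le hw hw1 hη (hv j) (b j) hbase
    have update_apply (k) (hk : k ∈ s) : Function.update c j i k = c k :=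
      Function.update_of_ne (ne_of_mem_of_not_mem hk hj) i c
    refine ⟨Function.update c j i, ?_⟩
    simp only [Finset.sum_insert hj, Function.update_self]
    rw [Finset.sum_congr rfl fun k hk => congrArg (v k) (update_apply k hk),
      Finset.sum_congr rfl fun k hk => congrArg (b k) (update_apply k hk)]
    rw [← hu] at hi
    rw [show z + (v j i + ∑ k ∈ s, v k (c k)) = z + u + ∑ k ∈ s, v k (c k) + (v j i - u) by abel,
      ← add_assoc]
    linarith

lemma exists_selection [Fintype κ] (hκ : 2 ≤ Fintype.card κ) (hP : HasQuadraticRemainder 𝕜 P K)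
    (hw : ∀ i, 0 ≤ w i) (hw1 : ∑ i, w i = 1) {v : κ → ι → V}
    (hv : ∀ j i, ‖v j i‖ ≤ 1 / Fintype.card κ) (b : κ → ι → ℝ) :
    ∃ c : κ → ι,
      RCLike.re (P (∑ j, ∑ i, (w i : 𝕜) • v j i)) - ∑ j, ∑ i, w i * b j i
          - 4 * K / Fintype.card κ ≤
        RCLike.re (P (∑ j, v j (c j))) - ∑ j, b j (c j) := by
  have hcard : (2 : ℝ) ≤ Fintype.card κ := mod_cast hκ
  obtain ⟨c, hc⟩ := hP.exists_selection_finset hw hw1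
    (one_div_le_one_div_of_le two_pos hcard) hv b Finset.univ 0
    (by rw [norm_zero, Finset.card_univ]; field_simp; simp)
  refine ⟨c, ?_⟩
  simp only [zero_add, Finset.card_univ] at hc
  convert hc using 2
  field_simp

end HasQuadraticRemainder

end Selection

section SignWeight

variable {ι : Type*} [Fintype ι]

/-- The probability weights `(1 + s r) / (2 |ι|)` on signed indices `(i, s)`. Under them the random
vector `(s |ι| / r) g i` has mean `∑ i, g i`: the sign bias `r` compensates for the scaling by
`1 / r` that turns a vector of norm `r` into selections of norm one. -/
noncomputable def signWeight (r : ℝ) (p : ι × ℤˣ) : ℝ :=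
  (1 + (p.2 : ℤ) * r) / (2 * Fintype.card ι)

lemma signWeight_nonneg {r : ℝ} (hr : |r| ≤ 1) (p : ι × ℤˣ) : 0 ≤ signWeight r p := by
  have : 0 ≤ 1 + (p.2 : ℤ) * r := by
    rcases Int.units_eq_one_or p.2 with h | h <;> simp [h] <;> linarith [abs_le.1 hr]
  unfold signWeight
  positivity

lemma sum_signWeight_mul (r : ℝ) (b : ι → ℝ) :
    ∑ p : ι × ℤˣ, signWeight r p * b p.1 = (∑ i, b i) / Fintype.card ι := by
  simp only [Fintype.sum_prod_type, UnitsInt.univ, Finset.sum_div]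
  refine Finset.sum_congr rfl fun i _ => ?_
  rw [Finset.sum_pair (by decide)]
  simp only [signWeight, Units.val_one, Units.val_neg]
  push_cast
  ring

lemma sum_signWeight [Nonempty ι] (r : ℝ) : ∑ p : ι × ℤˣ, signWeight r p = 1 := by
  simpa using sum_signWeight_mul r fun _ : ι => 1

lemma sum_signWeight_smul {𝕜 V : Type*} [RCLike 𝕜] [AddCommGroup V] [Module 𝕜 V]
    {r : ℝ} (hr : r ≠ 0) (g : ι → V) :
    ∑ p : ι × ℤˣ, (signWeight r p : 𝕜) • ((((p.2 : ℤ) * (Fintype.card ι / r) : ℝ) : 𝕜) • g p.1) =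
      ∑ i, g i := by
  simp only [Fintype.sum_prod_type, UnitsInt.univ]
  refine Finset.sum_congr rfl fun i _ => ?_
  have : Nonempty ι := ⟨i⟩
  rw [Finset.sum_pair (by decide), smul_smul, smul_smul, ← add_smul]
  convert one_smul 𝕜 (g i)
  norm_cast
  simp only [signWeight, Units.val_one, Units.val_neg]
  push_cast
  field_simp
  ring

variable {𝕜 V κ : Type*} [RCLike 𝕜] [NormedAddCommGroup V] [NormedSpace 𝕜 V] [Fintype κ]

lemma norm_sign_smul {r : ℝ} (hr : 0 ≤ r) (s : ℤˣ) (x : V) :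
    ‖(((s : ℤ) * r : ℝ) : 𝕜) • x‖ = r * ‖x‖ := by
  rw [norm_smul, RCLike.norm_ofReal, abs_mul, ← Int.cast_abs, Int.isUnit_iff_abs_eq.1 s.isUnit,
    Int.cast_one, one_mul, abs_of_nonneg hr]

lemma HasQuadraticRemainder.exists_signed_selection [Nonempty ι] (hκ : 2 ≤ Fintype.card κ)
    {P : V → 𝕜} {K : ℝ≥0} (hP : HasQuadraticRemainder 𝕜 P K) {r : ℝ} (hr0 : 0 < r) (hr1 : r ≤ 1)
    {g : κ → ι → V} (hg : ∀ j i, ‖g j i‖ = r / (Fintype.card κ * Fintype.card ι))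
    (b : κ → ι → ℝ) :
    ∃ (c : κ → ι) (s : κ → ℤˣ),
      RCLike.re (P (∑ j, ∑ i, g j i)) - (∑ j, ∑ i, b j i) / Fintype.card ι
          - 4 * K / Fintype.card κ ≤
        RCLike.re (P (∑ j, (((s j : ℤ) * (Fintype.card ι / r) : ℝ) : 𝕜) • g j (c j)))
          - ∑ j, b j (c j) := by
  obtain ⟨c, hc⟩ := hP.exists_selection (w := signWeight r) hκ
    (signWeight_nonneg (abs_le.2 ⟨by linarith, hr1⟩)) (sum_signWeight r)
    (v := fun j p => (((p.2 : ℤ) * (Fintype.card ι / r) : ℝ) : 𝕜) • g j p.1)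
    (fun j p => by
      rw [norm_sign_smul (by positivity), hg]
      field_simp
      rfl) fun j p => b j p.1
  simp only [sum_signWeight_smul hr0.ne', sum_signWeight_mul, ← Finset.sum_div] at hc
  exact ⟨fun j => (c j).1, fun j => (c j).2, hc⟩

end SignWeight

namespace IsContPolynomial

variable {𝕜 X : Type} [RCLike 𝕜] [NormedAddCommGroup X] [NormedSpace 𝕜 X] {P : X → 𝕜}

lemma continuous (hP : IsContPolynomial P) : Continuous P := by
  obtain ⟨n, c, M, hM⟩ := hP
  rw [funext hM]
  fun_prop

lemma const_mul (hP : IsContPolynomial P) (ω : 𝕜) : IsContPolynomial fun x => ω * P x := by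
  obtain ⟨n, c, M, hM⟩ := hP
  exact ⟨n, ω * c, fun k => ω • M k, fun x => by simp [hM, mul_add, Finset.mul_sum]⟩

lemma exists_hasQuadraticRemainder (hP : IsContPolynomial P) :
    ∃ K : ℝ≥0, HasQuadraticRemainder 𝕜 P K := by
  obtain ⟨n, c, M, hM⟩ := hP
  rw [funext hM]
  exact ⟨_, (HasQuadraticRemainder.sum fun k => hasQuadraticRemainder_diagonal (M k)).const_add c⟩

end IsContPolynomial

section GreedySequence

variable {β : Type*} {C : Set β} {m : β → ℝ}

lemma exists_forall_sub_le_two_mul (hC : BddAbove (m '' C)) {u : β} (hu : u ∈ C) :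
    ∃ v ∈ C, ∀ w ∈ C, m w - m u ≤ 2 * (m v - m u) := by
  have le_sup {w : β} (hw : w ∈ C) : m w ≤ sSup (m '' C) := le_csSup hC (mem_image_of_mem m hw)
  rcases (le_sup hu).eq_or_lt with h | h
  · exact ⟨u, hu, fun w hw => by linarith [le_sup hw]⟩
  · obtain ⟨_, ⟨v, hv, rfl⟩, hlt⟩ := exists_lt_of_lt_csSup ⟨_, mem_image_of_mem m hu⟩
      (show (sSup (m '' C) + m u) / 2 < sSup (m '' C) by linarith)
    exact ⟨v, hv, fun w hw => by linarith [le_sup hw]⟩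

lemma exists_monotone_forall_sub_le_two_mul [Preorder β] (hC : BddAbove (m '' C))
    (hne : C.Nonempty) :
    ∃ u : ℕ → β, Monotone u ∧ (∀ n, u n ∈ C) ∧
      ∀ n, ∀ w ∈ C, u n ≤ w → m w - m (u n) ≤ 2 * (m (u (n + 1)) - m (u n)) := by
  have step (u : C) : ∃ v : C, u.1 ≤ v ∧
      ∀ w ∈ C, u.1 ≤ w → m w - m u ≤ 2 * (m v - m u) := by
    obtain ⟨v, ⟨hv, huv⟩, h⟩ := exists_forall_sub_le_two_mul (C := C ∩ Ici u.1)
      (hC.mono (image_mono inter_subset_left)) ⟨u.2, self_mem_Ici⟩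
    exact ⟨⟨v, hv⟩, huv, fun w hw huw => h w ⟨hw, huw⟩⟩
  choose next le_next hnext using step
  obtain ⟨u₀, hu₀⟩ := hne
  refine ⟨fun n => (next^[n] ⟨u₀, hu₀⟩).1, monotone_nat_of_le_succ fun n => ?_,
    fun n => Subtype.coe_prop _, fun n w hw h => ?_⟩
  · rw [Function.iterate_succ_apply']
    exact le_next _
  · simp only [Function.iterate_succ_apply']
    exact hnext _ w hw h

end GreedySequence

section Sierpinski

lemma exists_subset_measureReal_maximal {α : Type*} [MeasurableSpace α] (ν : Measure α)
    [IsFiniteMeasure ν] (S : Set α) {t : ℝ} (ht : 0 ≤ t) :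
    ∃ U ⊆ S, MeasurableSet U ∧ ν.real U ≤ t ∧
      ∀ W ⊆ S, MeasurableSet W → ν.real W ≤ t → U ⊆ W → ν.real W ≤ ν.real U := by
  let C : Set (Set α) := {U | U ⊆ S ∧ MeasurableSet U ∧ ν.real U ≤ t}
  obtain ⟨U, hmono, hU, hgreedy⟩ := exists_monotone_forall_sub_le_two_mul (C := C) (m := ν.real)
    ⟨t, by rintro _ ⟨W, hW, rfl⟩; exact hW.2.2⟩ ⟨∅, by simp [C, ht]⟩
  have hlim : Filter.Tendsto (fun n => ν.real (U n)) Filter.atTop (nhds (ν.real (⋃ n, U n))) :=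
    (ENNReal.tendsto_toReal (measure_ne_top _ _)).comp (tendsto_measure_iUnion_atTop hmono)
  refine ⟨⋃ n, U n, iUnion_subset fun n => (hU n).1, .iUnion fun n => (hU n).2.1,
    le_of_tendsto' hlim fun n => (hU n).2.2, fun W hWS hW hWt hUW => ?_⟩
  have gain_le := le_of_tendsto_of_tendsto' (hlim.const_sub (ν.real W))
    (((hlim.comp (Filter.tendsto_add_atTop_nat 1)).sub hlim).const_mul 2)
    fun n => hgreedy n W ⟨hWS, hW, hWt⟩ ((subset_iUnion U n).trans hUW)
  linarith

namespace Atomless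

variable {α : Type} [MeasurableSpace α]

lemma withDensity {μ : Measure α} (hμ : Atomless μ) {g : α → ℝ≥0∞} (hg : Measurable g)
    [IsFiniteMeasure (μ.withDensity g)] : Atomless (μ.withDensity g) := by
  have null_iff (S : Set α) : μ.withDensity g S = 0 ↔ μ ({x | g x ≠ 0} ∩ S) = 0 :=
    withDensity_apply_eq_zero hg
  intro A hA hA0
  obtain ⟨B, hB, hBm, hB0, hBlt⟩ := hμ ({x | g x ≠ 0} ∩ A)
    ((hg (measurableSet_singleton 0).compl).inter hA)
    (pos_iff_ne_zero.2 fun h => hA0.ne' ((null_iff A).2 h))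
  obtain ⟨hBg, hBA⟩ := subset_inter_iff.1 hB
  refine ⟨B, hBA, hBm, pos_iff_ne_zero.2 fun h => ?_, (measure_mono hBA).lt_of_ne fun h => ?_⟩
  · rw [null_iff, inter_eq_self_of_subset_right hBg] at h
    exact hB0.ne' h
  · have hdiff : μ (({x | g x ≠ 0} ∩ A) \ B) = 0 := by
      rw [inter_sdiff_assoc, ← null_iff, measure_sdiff hBA hBm.nullMeasurableSet
        (measure_ne_top _ _), h, tsub_self]
    exact hBlt.not_ge (measure_mono_ae (ae_le_set.2 hdiff))

variable {ν : Measure α} [IsFiniteMeasure ν]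

lemma exists_subset_le_half (hν : Atomless ν) {A : Set α} (hA : MeasurableSet A)
    (hA0 : 0 < ν.real A) :
    ∃ B ⊆ A, MeasurableSet B ∧ 0 < ν.real B ∧ ν.real B ≤ ν.real A / 2 := by
  obtain ⟨C, hCA, hC, hC0, hClt⟩ := hν A hA (ENNReal.toReal_pos_iff.1 hA0).1
  have hC0 : 0 < ν.real C := ENNReal.toReal_pos hC0.ne' (measure_ne_top _ _)
  have hClt : ν.real C < ν.real A :=
    (ENNReal.toReal_lt_toReal (measure_ne_top _ _) (measure_ne_top _ _)).2 hClt
  have hdiff : ν.real (A \ C) = ν.real A - ν.real C := measureReal_sdiff hCA hC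
  rcases le_total (ν.real C) (ν.real A / 2) with h | h
  · exact ⟨C, hCA, hC, hC0, h⟩
  · exact ⟨A \ C, sdiff_subset, hA.diff hC, by linarith, by linarith⟩

lemma exists_subset_le (hν : Atomless ν) {A : Set α} (hA : MeasurableSet A) (hA0 : 0 < ν.real A)
    {δ : ℝ} (hδ : 0 < δ) : ∃ B ⊆ A, MeasurableSet B ∧ 0 < ν.real B ∧ ν.real B ≤ δ := by
  have halving (n : ℕ) :
      ∃ B ⊆ A, MeasurableSet B ∧ 0 < ν.real B ∧ ν.real B ≤ ν.real A * (1 / 2) ^ n := by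
    induction n with
    | zero => exact ⟨A, subset_rfl, hA, hA0, by simp⟩
    | succ n ih =>
      obtain ⟨B, hBA, hB, hB0, hBn⟩ := ih
      obtain ⟨C, hCB, hC, hC0, hCB2⟩ := hν.exists_subset_le_half hB hB0
      exact ⟨C, hCB.trans hBA, hC, hC0, by rw [pow_succ]; linarith⟩
  obtain ⟨n, hn⟩ := exists_pow_lt_of_lt_one (div_pos hδ hA0) one_half_lt_one
  obtain ⟨B, hBA, hB, hB0, hBn⟩ := halving n
  exact ⟨B, hBA, hB, hB0, hBn.trans ((lt_div_iff₀' hA0).1 hn).le⟩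

-- Sierpiński's theorem on the range of an atomless measure.
lemma exists_subset_measureReal_eq (hν : Atomless ν) {S : Set α} (hS : MeasurableSet S) {t : ℝ}
    (ht0 : 0 ≤ t) (ht : t ≤ ν.real S) : ∃ B ⊆ S, MeasurableSet B ∧ ν.real B = t := by
  obtain ⟨U, hUS, hU, hUt, hmax⟩ := exists_subset_measureReal_maximal ν S ht0
  refine ⟨U, hUS, hU, hUt.antisymm (le_of_not_gt fun hlt => ?_)⟩
  have hdiff : ν.real (S \ U) = ν.real S - ν.real U := measureReal_sdiff hUS hU
  obtain ⟨B, hB, hBm, hB0, hBt⟩ :=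
    hν.exists_subset_le (hS.diff hU) (by linarith) (sub_pos.2 hlt)
  have hunion : ν.real (U ∪ B) = ν.real U + ν.real B :=
    measureReal_union (disjoint_sdiff_right.mono_right hB) hBm
  have := hmax (U ∪ B) (union_subset hUS (hB.trans sdiff_subset)) (hU.union hBm) (by linarith)
    subset_union_left
  linarith

lemma exists_pairwiseDisjoint_measureReal_eq {ι : Type*} (hν : Atomless ν) {c : ℝ} (hc : 0 ≤ c)
    (s : Finset ι) (hs : s.card * c ≤ ν.real univ) :
    ∃ E : ι → Set α, (∀ i, MeasurableSet (E i)) ∧ (s : Set ι).PairwiseDisjoint E ∧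
      ∀ i ∈ s, ν.real (E i) = c := by
  classical
  induction s using Finset.induction_on with
  | empty => exact ⟨fun _ => ∅, by simp⟩
  | insert i s hi ih =>
    rw [Finset.card_insert_of_notMem hi] at hs
    push_cast at hs
    obtain ⟨E, hE, hd, hc'⟩ := ih (by linarith)
    have hused : ν.real (⋃ j ∈ s, E j) = s.card * c := by
      rw [measureReal_biUnion_finset hd fun j _ => hE j, Finset.sum_congr rfl hc']
      simp
    have hUm : MeasurableSet (⋃ j ∈ s, E j) := s.measurableSet_biUnion fun j _ => hE j
    obtain ⟨B, hB, hBm, hBc⟩ := hν.exists_subset_measureReal_eq hUm.compl hc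
      (by rw [measureReal_compl hUm]; linarith)
    have update_apply (j) (hj : j ∈ s) : Function.update E i B j = E j :=
      Function.update_of_ne (ne_of_mem_of_not_mem hj hi) B E
    refine ⟨Function.update E i B, fun j => ?_, ?_, ?_⟩
    · rcases eq_or_ne j i with rfl | hj <;> simp [*]
    · rw [Finset.coe_insert, pairwiseDisjoint_insert_of_notMem hi]
      refine ⟨fun j hj k hk hjk => ?_, fun j hj => ?_⟩
      · simpa only [Function.onFun, update_apply j hj, update_apply k hk] using hd hj hk hjk
      · rw [Function.update_self, update_apply j hj]
        exact (disjoint_compl_left.mono_left hB).mono_right (subset_biUnion_of_mem hj)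
    · simpa [hBc] using fun j hj => (congrArg ν.real (update_apply j hj)).trans (hc' j hj)

end Atomless

end Sierpinski

section LProjection

variable {𝕜 X : Type*} [RCLike 𝕜] [NormedAddCommGroup X] [NormedSpace 𝕜 X] {Q : X →L[𝕜] X}

lemma norm_lprojection_add_norm_sub (hQ : IsLprojection X Q) (x : X) :
    ‖Q x‖ + ‖x - Q x‖ = ‖x‖ :=
  (hQ.Lnorm x).symm

lemma lprojection_eq_self_of_norm_eq (hQ : IsLprojection X Q) {x : X} (hx : ‖Q x‖ = ‖x‖) :
    Q x = x := by
  have := norm_lprojection_add_norm_sub hQ x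
  exact (sub_eq_zero.1 (norm_eq_zero.1 (by linarith))).symm

lemma exists_contraction_map_eq_norm_sub_le (hQ : IsLprojection X Q) {y x' : X} (hQy : Q y = y)
    (hy : ‖y‖ = 1) (hx' : ‖x'‖ ≤ 1) :
    ∃ T : X →L[𝕜] X, ‖T‖ ≤ 1 ∧ T y = x' ∧ ∀ x, ‖T x - x‖ ≤ 2 * ‖Q x‖ := by
  obtain ⟨φ, hφ, hφy⟩ := exists_dual_vector'' 𝕜 y
  have rank_one_le (x : X) : ‖φ (Q x) • x'‖ ≤ ‖Q x‖ := by
    rw [norm_smul]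
    exact mul_le_of_le_one_right (norm_nonneg _) hx' |>.trans
      (φ.le_of_opNorm_le hφ (Q x) |>.trans_eq (one_mul _))
  refine ⟨1 - Q + (φ.comp Q).smulRight x', ?_, ?_, fun x => ?_⟩
  · refine ContinuousLinearMap.opNorm_le_bound _ zero_le_one fun x => ?_
    calc ‖x - Q x + φ (Q x) • x'‖ ≤ ‖x - Q x‖ + ‖φ (Q x) • x'‖ := norm_add_le _ _
      _ ≤ 1 * ‖x‖ := by linarith [rank_one_le x, norm_lprojection_add_norm_sub hQ x]
  · simp [hQy, hφy, hy]
  · calc ‖x - Q x + φ (Q x) • x' - x‖ = ‖φ (Q x) • x' - Q x‖ := by congr 1; abel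
      _ ≤ 2 * ‖Q x‖ := by linarith [norm_sub_le (φ (Q x) • x') (Q x), rank_one_le x]

end LProjection

section IndicatorLp

variable {𝕜 α Y : Type*} [RCLike 𝕜] [MeasurableSpace α] {μ : Measure α} [NormedAddCommGroup Y]
  [NormedSpace 𝕜 Y] {p : ℝ≥0∞} [Fact (1 ≤ p)] {S T : Set α}

variable (𝕜) in
/-- The band projection `f ↦ 1_S f` of `Lᵖ(μ, Y)`. -/
noncomputable def indicatorLp (hS : MeasurableSet S) : Lp Y p μ →L[𝕜] Lp Y p μ :=
  LinearMap.mkContinuous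
    { toFun f := ((Lp.memLp f).indicator hS).toLp _
      map_add' f g := by
        rw [← MemLp.toLp_add, MemLp.toLp_eq_toLp_iff, ← indicator_add']
        exact (Lp.coeFn_add f g).indicator
      map_smul' a f := by
        rw [RingHom.id_apply, ← MemLp.toLp_const_smul, MemLp.toLp_eq_toLp_iff]
        exact (Lp.coeFn_smul a f).indicator.trans (.of_eq (indicator_const_smul S a f)) }
    1 fun f => by
    rw [one_mul]
    refine Lp.norm_le_norm_of_ae_le ?_
    filter_upwards [((Lp.memLp f).indicator hS).coeFn_toLp] with x hx
    exact (congrArg norm hx).trans_le (norm_indicator_le_norm_self _ x)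

lemma coeFn_indicatorLp (hS : MeasurableSet S) (f : Lp Y p μ) :
    indicatorLp 𝕜 hS f =ᵐ[μ] S.indicator f :=
  ((Lp.memLp f).indicator hS).coeFn_toLp

lemma indicatorLp_apply_indicatorLp (hS : MeasurableSet S) (hT : MeasurableSet T) (f : Lp Y p μ) :
    indicatorLp 𝕜 hS (indicatorLp 𝕜 hT f) = indicatorLp 𝕜 (hS.inter hT) f := by
  refine Lp.ext ((coeFn_indicatorLp hS _).trans ?_)
  exact (coeFn_indicatorLp hT f).indicator.trans
    ((Set.indicator_indicator S T f).eventuallyEq.trans (coeFn_indicatorLp _ f).symm)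

lemma indicatorLp_apply_of_subset (hS : MeasurableSet S) (hT : MeasurableSet T) (h : T ⊆ S)
    (f : Lp Y p μ) : indicatorLp 𝕜 hS (indicatorLp 𝕜 hT f) = indicatorLp 𝕜 hT f := by
  simp only [indicatorLp_apply_indicatorLp, inter_eq_self_of_subset_right h]

lemma indicatorLp_empty (f : Lp Y p μ) : indicatorLp 𝕜 .empty f = 0 := by
  refine Lp.ext ((coeFn_indicatorLp _ f).trans ?_)
  rw [indicator_empty']
  exact (Lp.coeFn_zero Y p μ).symm

lemma indicatorLp_apply_of_disjoint (hS : MeasurableSet S) (hT : MeasurableSet T)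
    (h : Disjoint S T) (f : Lp Y p μ) : indicatorLp 𝕜 hS (indicatorLp 𝕜 hT f) = 0 := by
  simp only [indicatorLp_apply_indicatorLp, h.inter_eq, indicatorLp_empty]

lemma indicatorLp_iUnion {ι : Type*} [Fintype ι] {E : ι → Set α} (hE : ∀ i, MeasurableSet (E i))
    (hd : Pairwise (Function.onFun Disjoint E)) (f : Lp Y p μ) :
    indicatorLp 𝕜 (.iUnion hE) f = ∑ i, indicatorLp 𝕜 (hE i) f := by
  refine Lp.ext ?_
  filter_upwards [coeFn_indicatorLp (𝕜 := 𝕜) (.iUnion hE) f,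
    Lp.coeFn_fun_finsetSum Finset.univ fun i => indicatorLp 𝕜 (hE i) f,
    Filter.eventually_all.2 fun i => coeFn_indicatorLp (𝕜 := 𝕜) (hE i) f] with x hx hsum hi
  rw [hx, hsum, Finset.sum_congr rfl fun i _ => hi i,
    ← Finset.indicator_biUnion_apply Finset.univ E fun i _ j _ hij => hd hij]
  simp

lemma indicatorLp_iUnion_sum_smul {ι : Type*} [Fintype ι] {E : ι → Set α}
    (hE : ∀ i, MeasurableSet (E i)) (a : ι → 𝕜) (f : Lp Y p μ) :
    indicatorLp 𝕜 (.iUnion hE) (∑ i, a i • indicatorLp 𝕜 (hE i) f) =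
      ∑ i, a i • indicatorLp 𝕜 (hE i) f := by
  simp only [map_sum, map_smul, indicatorLp_apply_of_subset _ _ (subset_iUnion E _)]

lemma indicatorLp_add_indicatorLp_compl (hS : MeasurableSet S) (f : Lp Y p μ) :
    indicatorLp 𝕜 hS f + indicatorLp 𝕜 hS.compl f = f := by
  refine Lp.ext ((Lp.coeFn_add _ _).trans (((coeFn_indicatorLp hS f).add
    (coeFn_indicatorLp hS.compl f)).trans ?_))
  rw [indicator_self_add_compl]

end IndicatorLp

section L1

variable {𝕜 α Y : Type*} [RCLike 𝕜] [MeasurableSpace α] {μ : Measure α} [NormedAddCommGroup Y]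

/-- The measure `S ↦ ‖1_S f‖` attached to `f ∈ L¹(μ, Y)`, see `norm_indicatorLp`. -/
noncomputable def normMeasure (f : Lp Y 1 μ) : Measure α :=
  μ.withDensity fun x => ‖f x‖ₑ

instance (f : Lp Y 1 μ) : IsFiniteMeasure (normMeasure f) :=
  isFiniteMeasure_withDensity (L1.hasFiniteIntegral_coeFn f).ne

lemma normMeasure_real_univ (f : Lp Y 1 μ) : (normMeasure f).real univ = ‖f‖ := by
  rw [L1.norm_def, measureReal_def, normMeasure, withDensity_apply _ .univ, setLIntegral_univ]

variable [NormedSpace 𝕜 Y]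

lemma norm_indicatorLp {S : Set α} (hS : MeasurableSet S) (f : Lp Y 1 μ) :
    ‖indicatorLp 𝕜 hS f‖ = (normMeasure f).real S := by
  rw [L1.norm_def, measureReal_def, normMeasure, withDensity_apply _ hS, ← lintegral_indicator hS]
  congr 1
  refine lintegral_congr_ae ((coeFn_indicatorLp (𝕜 := 𝕜) hS f).mono fun x hx => ?_)
  simp only [hx, enorm_indicator_eq_indicator_enorm]

lemma isLprojection_indicatorLp {S : Set α} (hS : MeasurableSet S) :
    IsLprojection (Lp Y 1 μ) (indicatorLp 𝕜 hS : Lp Y 1 μ →L[𝕜] Lp Y 1 μ) where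
  proj := ContinuousLinearMap.ext fun f => indicatorLp_apply_of_subset hS hS subset_rfl f
  Lnorm f := by
    have hcompl : (1 - indicatorLp 𝕜 hS : Lp Y 1 μ →L[𝕜] Lp Y 1 μ) • f =
        indicatorLp 𝕜 hS.compl f :=
      sub_eq_of_eq_add' (indicatorLp_add_indicatorLp_compl hS f).symm
    rw [hcompl, ContinuousLinearMap.smul_def, norm_indicatorLp, norm_indicatorLp,
      measureReal_add_measureReal_compl hS, normMeasure_real_univ]

section Disjoint

variable {ι : Type*} [Fintype ι] {E : ι → Set α}

lemma sum_norm_indicatorLp_eq (hE : ∀ i, MeasurableSet (E i))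
    (hd : Pairwise (Function.onFun Disjoint E)) (x : Lp Y 1 μ) :
    ∑ i, ‖indicatorLp 𝕜 (hE i) x‖ = ‖indicatorLp 𝕜 (.iUnion hE) x‖ := by
  simp only [norm_indicatorLp]
  rw [← measureReal_biUnion_finset (fun i _ j _ hij => hd hij) fun i _ => hE i]
  simp

lemma sum_norm_indicatorLp_le (hE : ∀ i, MeasurableSet (E i))
    (hd : Pairwise (Function.onFun Disjoint E)) (x : Lp Y 1 μ) :
    ∑ i, ‖indicatorLp 𝕜 (hE i) x‖ ≤ ‖x‖ := by
  rw [sum_norm_indicatorLp_eq hE hd, norm_indicatorLp, ← normMeasure_real_univ]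
  exact measureReal_mono (subset_univ _)

lemma norm_sum_smul_indicatorLp (hE : ∀ i, MeasurableSet (E i))
    (hd : Pairwise (Function.onFun Disjoint E)) (a : ι → 𝕜) (f : Lp Y 1 μ) :
    ‖∑ i, a i • indicatorLp 𝕜 (hE i) f‖ = ∑ i, ‖a i • indicatorLp 𝕜 (hE i) f‖ := by
  classical
  have indicatorLp_sum (j) : indicatorLp 𝕜 (hE j) (∑ i, a i • indicatorLp 𝕜 (hE i) f) =
      a j • indicatorLp 𝕜 (hE j) f := by
    rw [map_sum, Finset.sum_eq_single j]
    · rw [map_smul, indicatorLp_apply_of_subset _ _ subset_rfl]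
    · intro i _ hij
      rw [map_smul, indicatorLp_apply_of_disjoint _ _ (hd hij.symm), smul_zero]
    · simp
  nth_rw 1 [← indicatorLp_iUnion_sum_smul hE a f]
  rw [← sum_norm_indicatorLp_eq hE hd]
  exact Finset.sum_congr rfl fun j _ => congrArg norm (indicatorLp_sum j)

end Disjoint

end L1

section EquinormSelection

variable {𝕜 Y : Type*} {α : Type} [RCLike 𝕜] [MeasurableSpace α] {μ : Measure α}
  [NormedAddCommGroup Y]

lemma atomless_normMeasure (hμ : Atomless μ) (f : Lp Y 1 μ) : Atomless (normMeasure f) :=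
  have : IsFiniteMeasure (μ.withDensity fun x => ‖f x‖ₑ) :=
    inferInstanceAs (IsFiniteMeasure (normMeasure f))
  hμ.withDensity (Lp.stronglyMeasurable f).enorm

variable [NormedSpace 𝕜 Y]

lemma exists_equinorm_partition (hμ : Atomless μ) (f : Lp Y 1 μ) (ι : Type*) [Fintype ι]
    [Nonempty ι] :
    ∃ (E : ι → Set α) (hE : ∀ i, MeasurableSet (E i)), Pairwise (Function.onFun Disjoint E) ∧
      (∀ i, ‖indicatorLp 𝕜 (hE i) f‖ = ‖f‖ / Fintype.card ι) ∧
      ∑ i, indicatorLp 𝕜 (hE i) f = f := by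
  obtain ⟨E, hE, hd, hEf⟩ := (atomless_normMeasure hμ f).exists_pairwiseDisjoint_measureReal_eq
    (c := ‖f‖ / Fintype.card ι) (by positivity) (Finset.univ : Finset ι)
    (by rw [normMeasure_real_univ, Finset.card_univ, mul_div_cancel₀ _ (by positivity)])
  replace hd : Pairwise (Function.onFun Disjoint E) := by
    simpa [PairwiseDisjoint, pairwise_univ] using hd
  have norm_piece (i) : ‖indicatorLp 𝕜 (hE i) f‖ = ‖f‖ / Fintype.card ι := by
    rw [norm_indicatorLp, hEf i (Finset.mem_univ i)]
  refine ⟨E, hE, hd, norm_piece, ?_⟩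
  rw [← indicatorLp_iUnion hE hd]
  refine lprojection_eq_self_of_norm_eq (isLprojection_indicatorLp _) ?_
  rw [← sum_norm_indicatorLp_eq hE hd, Finset.sum_congr rfl fun i _ => norm_piece i,
    Finset.sum_const, Finset.card_univ, nsmul_eq_mul, mul_div_cancel₀ _ (by positivity)]

variable {P : Lp Y 1 μ → 𝕜} {K : ℝ≥0} {f : Lp Y 1 μ} {τ : Type*} [Fintype τ]

lemma HasQuadraticRemainder.exists_indicatorLp_selection (hP : HasQuadraticRemainder 𝕜 P K)
    (hμ : Atomless μ) (hf0 : f ≠ 0) (hf1 : ‖f‖ ≤ 1) (x : τ → Lp Y 1 μ) {m : ℕ} (hm : 2 ≤ m) :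
    ∃ (A : Set α) (hA : MeasurableSet A) (y : Lp Y 1 μ), indicatorLp 𝕜 hA y = y ∧ ‖y‖ = 1 ∧
      RCLike.re (P f) - (4 * K + ∑ k, ‖x k‖) / m ≤
        RCLike.re (P y) - ∑ k, ‖indicatorLp 𝕜 hA (x k)‖ := by
  have : NeZero m := ⟨by omega⟩
  have hf : 0 < ‖f‖ := norm_pos_iff.2 hf0
  obtain ⟨E, hE, hd, hEf, hsum⟩ := exists_equinorm_partition (𝕜 := 𝕜) hμ f (Fin m × Fin m)
  obtain ⟨c, s, hcs⟩ := hP.exists_signed_selection (by simpa) hf hf1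
    (g := fun j i => indicatorLp 𝕜 (hE (j, i)) f) (fun j i => by simpa using hEf (j, i))
    fun j i => ∑ k, ‖indicatorLp 𝕜 (hE (j, i)) (x k)‖
  have hEc (j) : MeasurableSet (E (j, c j)) := hE _
  have hdc : Pairwise (Function.onFun Disjoint fun j => E (j, c j)) :=
    fun i j hij => hd fun h => hij (Prod.ext_iff.1 h).1
  refine ⟨_, .iUnion hEc, _, indicatorLp_iUnion_sum_smul hEc
    (fun j => (((s j : ℤ) * (m / ‖f‖) : ℝ) : 𝕜)) f, ?_, ?_⟩
  · rw [norm_sum_smul_indicatorLp hEc hdc]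
    simp only [norm_sign_smul (show 0 ≤ m / ‖f‖ by positivity), hEf, Finset.sum_const,
      Finset.card_univ, Fintype.card_prod, Fintype.card_fin, nsmul_eq_mul]
    push_cast
    field_simp
  · have total_le : ∑ j, ∑ i, ∑ k, ‖indicatorLp 𝕜 (hE (j, i)) (x k)‖ ≤ ∑ k, ‖x k‖ := by
      rw [← Fintype.sum_prod_type' fun j i => ∑ k, ‖indicatorLp 𝕜 (hE (j, i)) (x k)‖,
        Finset.sum_comm]
      exact Finset.sum_le_sum fun k _ => sum_norm_indicatorLp_le hE hd (x k)
    have total_div_le := div_le_div_of_nonneg_right total_le (Nat.cast_nonneg (α := ℝ) m)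
    rw [← Fintype.sum_prod_type' fun j i => indicatorLp 𝕜 (hE (j, i)) f, hsum,
      Finset.sum_comm (s := Finset.univ (α := Fin m)) (t := Finset.univ (α := τ)),
      Fintype.card_fin] at hcs
    simp only [← sum_norm_indicatorLp_eq hEc hdc]
    rw [add_div]
    linarith

end EquinormSelection

lemma IsContPolynomial.exists_indicatorLp_selection {𝕜 α Y : Type} [RCLike 𝕜] [MeasurableSpace α]
    {μ : Measure α} [NormedAddCommGroup Y] [NormedSpace 𝕜 Y] {P : Lp Y 1 μ → 𝕜}
    (hP : IsContPolynomial P) (hμ : Atomless μ) {f : Lp Y 1 μ} (hf0 : f ≠ 0) (hf1 : ‖f‖ ≤ 1)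
    {τ : Type*} [Finite τ] (x : τ → Lp Y 1 μ) {δ : ℝ} (hδ : 0 < δ) :
    ∃ (A : Set α) (hA : MeasurableSet A) (y : Lp Y 1 μ), indicatorLp 𝕜 hA y = y ∧ ‖y‖ = 1 ∧
      RCLike.re (P f) - δ ≤ RCLike.re (P y) ∧
      ∀ k, ‖indicatorLp 𝕜 hA (x k)‖ ≤ RCLike.re (P y) - RCLike.re (P f) + δ := by
  cases nonempty_fintype τ
  obtain ⟨K, hK⟩ := hP.exists_hasQuadraticRemainder
  obtain ⟨m, hm⟩ := exists_nat_ge (max 2 ((4 * K + ∑ k, ‖x k‖) / δ))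
  have hm2 : (2 : ℝ) ≤ m := (le_max_left _ _).trans hm
  obtain ⟨A, hA, y, hAy, hy, hPy⟩ :=
    hK.exists_indicatorLp_selection hμ hf0 hf1 x (m := m) (mod_cast hm2)
  have error_le : (4 * K + ∑ k, ‖x k‖) / m ≤ δ :=
    (div_le_comm₀ hδ (two_pos.trans_le hm2)).1 ((le_max_right _ _).trans hm)
  have hsum_nonneg : 0 ≤ ∑ k, ‖indicatorLp 𝕜 hA (x k)‖ :=
    Finset.sum_nonneg fun _ _ => norm_nonneg _
  refine ⟨A, hA, y, hAy, hy, by linarith, fun k => ?_⟩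
  have le_sum := Finset.single_le_sum (f := fun k => ‖indicatorLp 𝕜 hA (x k)‖)
    (fun _ _ => norm_nonneg _) (Finset.mem_univ k)
  linarith

section NormAttainment

variable {𝕜 X : Type*} [RCLike 𝕜] [NormedAddCommGroup X]

lemma exists_norm_eq_one_re_mul_eq_norm (z : 𝕜) : ∃ ω : 𝕜, ‖ω‖ = 1 ∧ RCLike.re (ω * z) = ‖z‖ := by
  obtain ⟨ω, hω, hz⟩ := RCLike.exists_norm_eq_mul_self z
  exact ⟨ω, hω, by rw [← hz, RCLike.ofReal_re]⟩

lemma exists_ne_zero_lt_norm [NormedSpace 𝕜 X] [Nontrivial X] {P : X → 𝕜} (hP : Continuous P)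
    {s t : ℝ} (hs : IsLUB ((fun x => ‖P x‖) '' closedBall (0 : X) 1) s) (ht : t < s) :
    ∃ x ≠ 0, ‖x‖ ≤ 1 ∧ t < ‖P x‖ := by
  obtain ⟨_, ⟨x₀, hx₀, rfl⟩, htx₀⟩ := (lt_isLUB_iff hs).1 ht
  rcases ne_or_eq x₀ 0 with h | rfl
  · exact ⟨x₀, h, mem_closedBall_zero_iff.1 hx₀, htx₀⟩
  · have : (nhdsWithin (0 : X) {0}ᶜ).NeBot := Module.punctured_nhds_neBot 𝕜 X 0
    obtain ⟨x, hx0, hx, hxP⟩ := (dense_compl_singleton (0 : X)).exists_mem_open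
      (isOpen_ball.inter (isOpen_lt continuous_const hP.norm))
      ⟨0, mem_ball_self one_pos, htx₀⟩
    exact ⟨x, hx0, (mem_ball_zero_iff.1 hx).le, hxP⟩

lemma polyWODP_of_subsingleton (𝕜 X : Type) [RCLike 𝕜] [NormedAddCommGroup X] [NormedSpace 𝕜 X]
    [Subsingleton X] : PolyWODP 𝕜 X := by
  intro P _ hP n xs _ x' _ a ha ε hε
  have hP0 : ‖P 0‖ = 1 := by
    have hball : closedBall (0 : X) 1 = {0} :=
      subsingleton_of_subsingleton.eq_singleton_of_mem (mem_closedBall_self zero_le_one)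
    rw [hball, image_singleton] at hP
    exact isLUB_singleton.unique hP
  obtain ⟨ω, hω, hωP⟩ := exists_norm_eq_one_re_mul_eq_norm (P 0)
  refine ⟨0, ω, 0, by simp, hω, by rw [norm_zero]; positivity, fun i => ?_, ?_,
    by rw [hωP, hP0]; linarith⟩
  · simpa [Subsingleton.elim (xs i) 0]
  · simpa [Subsingleton.elim x' 0]

end NormAttainment

theorem stmt18_general (𝕜 : Type) [RCLike 𝕜] (α : Type) [MeasurableSpace α]
    (μ : Measure α) (hμ : Atomless μ) (Y : Type) [NormedAddCommGroup Y] [NormedSpace 𝕜 Y] :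
    PolyWODP 𝕜 (Lp Y 1 μ) := by
  rcases subsingleton_or_nontrivial (Lp Y 1 μ) with _ | _
  · exact polyWODP_of_subsingleton 𝕜 _
  intro P hP hPnorm n xs _ x' hx' a ha ε hε
  set δ : ℝ := min (a / 2) (ε / 4)
  have hδ : 0 < δ := by positivity
  obtain ⟨f, hf0, hf1, hPf⟩ := exists_ne_zero_lt_norm (𝕜 := 𝕜) hP.continuous hPnorm
    (sub_lt_self 1 hδ)
  obtain ⟨ω, hω, hωf⟩ := exists_norm_eq_one_re_mul_eq_norm (P f)
  obtain ⟨A, hA, y, hAy, hy, hωPy, hAxs⟩ :=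
    (hP.const_mul ω).exists_indicatorLp_selection hμ hf0 hf1 xs hδ
  obtain ⟨T, hT, hTy, hTx⟩ :=
    exists_contraction_map_eq_norm_sub_le (isLprojection_indicatorLp hA) hAy hy hx'
  have re_le_one : RCLike.re (ω * P y) ≤ 1 := by
    refine (RCLike.re_le_norm _).trans ?_
    rw [norm_mul, hω, one_mul]
    exact hPnorm.1 (mem_image_of_mem _ (mem_closedBall_zero_iff.2 hy.le))
  have hδa : δ ≤ a / 2 := min_le_left _ _
  have hδε : δ ≤ ε / 4 := min_le_right _ _
  refine ⟨y, ω, T, hy.le, hω, by linarith, fun i => ?_, ?_, by linarith⟩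
  · linarith [hTx (xs i), hAxs i]
  · rwa [hTy, sub_self, norm_zero]

/-- For an atomless σ-finite positive measure `μ` and a nonzero Banach space `Y`, the
Bochner space `L₁(μ, Y)` has the polynomial weak operator Daugavet property. -/
theorem stmt18 (𝕜 : Type) [RCLike 𝕜] (α : Type) [MeasurableSpace α]
    (μ : Measure α) [SigmaFinite μ] (hμ : Atomless μ)
    (Y : Type) [NormedAddCommGroup Y] [NormedSpace 𝕜 Y] [CompleteSpace Y] [Nontrivial Y] :
    PolyWODP 𝕜 (Lp Y 1 μ) :=
  stmt18_general 𝕜 α μ hμ Y
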